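/- Let 𝕏 be a σ-finite measure space and ℳ a Banach L^0(𝕏)-module. For every f = (f_v)_{v∈𝕊_ℳ} ∈ ℓ₁(𝕊_ℳ, L^0(𝕏)) the family {f_v·v}_{v∈𝕊_ℳ} is summable in ℳ, and the map φ : ℓ₁(𝕊_ℳ, L^0(𝕏)) → ℳ defined by φ(f) := Σ_{v∈𝕊_ℳ} f_v·v is a quotient operator; in particular, ℳ is isomorphic as a Banach L^0(𝕏)-module to the quotient ℓ₁(𝕊_ℳ, L^0(𝕏))/ker(φ). -/

import Mathlib

/-!
The map `φ f = ∑ f_v • v` is a norm-decreasing map out of `ℓ₁(𝕊_ℳ, L⁰)`, and it is a quotient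
operator because every `w` has a *norm-attaining* preimage supported at one point: with
`v = |w|⁻¹ • w` (pointwise inverse, `0⁻¹ = 0`) one has `|v| = 1_{|w| ≠ 0}`, so `v ∈ 𝕊_ℳ`, and
`|w| • v = w`. The family equal to `|w|` at `v` and `0` elsewhere has `ℓ₁`-norm `|w|`
(`exists_sphere_smul`, `hasSumMod_single`).

Summability (`summableMod_of_bound`) compares with scalars. Let `b = |f|₁` and
`S_F = ∑_{v ∈ F} |f_v|`. As `|v| ≤ 1` on the sphere, two finite partial sums satisfy
`|∑_A - ∑_B| ≤ (b - S_A) + (b - S_B)`. By σ-finiteness the supremum `b` of the upward directed set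
of all `S_F` is the limit in measure of a sequence `S_{F_n}` (`exists_isLUB_of_directed`), so the
partial sums over `F_n` are Cauchy; their limit `s` satisfies `|s - ∑_{F ∪ G}| ≤ b - S_F`, and
`⋀_F (b - S_F) = 0`.

The inner suprema in the definition of a sum exist because `L⁰` is Dedekind complete
(`exists_isLUB`). It then suffices to dominate `|s - ∑_{F ∪ G}|` by some `c F` with `⋀_F c F = 0`
(`hasSumMod_of_le`), which also gives linearity.
-/

open MeasureTheory Filter Set TensorProduct

noncomputable section

namespace Paper

variable {X : Type*} [MeasurableSpace X]

/-- The space `L⁰(𝕏)` of real-valued measurable functions up to `μ`-a.e. equality. -/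
abbrev L0 (μ : Measure X) : Type _ := X →ₘ[μ] ℝ

instance (μ : Measure X) : CommRing (L0 μ) :=
  { (inferInstance : AddCommGroup (L0 μ)), (inferInstance : CommMonoid (L0 μ)) with
    left_distrib := fun a b c => AEEqFun.toGerm_injective <| by
      simp only [AEEqFun.mul_toGerm, AEEqFun.add_toGerm, mul_add]
    right_distrib := fun a b c => AEEqFun.toGerm_injective <| by
      simp only [AEEqFun.mul_toGerm, AEEqFun.add_toGerm, add_mul]
    zero_mul := fun a => AEEqFun.toGerm_injective <| by
      simp only [AEEqFun.mul_toGerm, AEEqFun.zero_toGerm, zero_mul]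
    mul_zero := fun a => AEEqFun.toGerm_injective <| by
      simp only [AEEqFun.mul_toGerm, AEEqFun.zero_toGerm, mul_zero] }

/-- The distance on `L⁰(𝕏)` inducing the topology of convergence in measure, defined through
the auxiliary finite measure `μ.toFinite` (which satisfies `μ ≪ μ.toFinite ≪ μ`). -/
noncomputable def dL0 (μ : Measure X) [SFinite μ] (f g : L0 μ) : ℝ :=
  ∫ x, min |f x - g x| 1 ∂(μ.toFinite)

/-- A Banach `L⁰(𝕏)`-module: a module over `L⁰(𝕏)` endowed with a pointwise norm, complete
with respect to the induced distance. -/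
class BanachMod (μ : Measure X) [SFinite μ] (M : Type*) [AddCommGroup M]
    [Module (L0 μ) M] where
  pn : M → L0 μ
  pn_nonneg : ∀ v : M, 0 ≤ pn v
  pn_eq_zero : ∀ v : M, pn v = 0 ↔ v = 0
  pn_add_le : ∀ v w : M, pn (v + w) ≤ pn v + pn w
  pn_smul : ∀ (f : L0 μ) (v : M), pn (f • v) = |f| * pn v
  complete : ∀ u : ℕ → M,
    (∀ ε : ℝ, 0 < ε → ∃ N : ℕ, ∀ m ≥ N, ∀ n ≥ N, dL0 μ (pn (u m - u n)) 0 < ε) →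
    ∃ v : M, Tendsto (fun n => dL0 μ (pn (u n - v)) 0) atTop (nhds 0)

/-- The pointwise norm of a Banach `L⁰(𝕏)`-module, with the measure explicit. -/
noncomputable def pn (μ : Measure X) [SFinite μ] {M : Type*} [AddCommGroup M]
    [Module (L0 μ) M] [BanachMod μ M] (v : M) : L0 μ :=
  BanachMod.pn v

/-- The distance on a Banach `L⁰(𝕏)`-module. -/
noncomputable def dM (μ : Measure X) [SFinite μ] {M : Type*} [AddCommGroup M]
    [Module (L0 μ) M] [BanachMod μ M] (v w : M) : ℝ :=
  dL0 μ (pn μ (v - w)) 0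

section Defs

variable (μ : Measure X) [SFinite μ]
variable {M N : Type*} [AddCommGroup M] [Module (L0 μ) M] [BanachMod μ M]
  [AddCommGroup N] [Module (L0 μ) N] [BanachMod μ N]

/-- The set of admissible bounds of a map between Banach `L⁰(𝕏)`-modules; the pointwise norm
`|T|` of a homomorphism is the infimum of this set. -/
def homBddSet (T : M → N) : Set (L0 μ) :=
  {g | 0 ≤ g ∧ ∀ v, pn μ (T v) ≤ g * pn μ v}

/-- A homomorphism of Banach `L⁰(𝕏)`-modules: an `L⁰(𝕏)`-linear map admitting a bound
`g ∈ L⁰(𝕏)⁺` with `|T v| ≤ g |v|` (equivalently, `L⁰(𝕏)`-linear and continuous). -/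
def IsHom (T : M →ₗ[L0 μ] N) : Prop :=
  ∃ g, g ∈ homBddSet μ (⇑T)

/-- The set of admissible bounds of an `L⁰(𝕏)`-valued map (for elements of the dual module). -/
def dualBddSet (ω : M → L0 μ) : Set (L0 μ) :=
  {g | 0 ≤ g ∧ ∀ v, |ω v| ≤ g * pn μ v}

/-- Membership in the dual module `ℳ*`: an `L⁰(𝕏)`-linear map `ω : ℳ → L⁰(𝕏)` admitting a
bound `g ∈ L⁰(𝕏)⁺` with `|ω v| ≤ g |v|`. -/
def IsDual (ω : M →ₗ[L0 μ] L0 μ) : Prop :=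
  ∃ g, g ∈ dualBddSet μ (⇑ω)

/-- Membership in the unit disc `𝔻_{ℳ*}` of the dual module: `|ω| ≤ 1`, equivalently
`|ω v| ≤ |v|` for every `v`. -/
def InDualDisc (ω : M →ₗ[L0 μ] L0 μ) : Prop :=
  ∀ v, |ω v| ≤ pn μ v

/-- The family of pointwise norms `|s - ∑_{i ∈ F ∪ G} v i|` for `G` finite disjoint from `F`,
whose `F`-indexed inf-sup being `0` defines `s = ∑_{i∈I} v i`. -/
def sumUB {I : Type*} (v : I → M) (s : M) (F : Finset I) : Set (L0 μ) :=
  {g | ∃ G : Finset I, Disjoint G F ∧ g = pn μ (s - (∑ i ∈ F, v i + ∑ i ∈ G, v i))}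

/-- `HasSumMod μ v s` means that the family `{v_i}` is summable in the Banach `L⁰(𝕏)`-module
with sum `s`, i.e. `⋀_F ⋁_G |s - ∑_{i ∈ F ∪ G} v_i| = 0` (the inner suprema being the values
of `b`, and the outer infimum being `0`). -/
def HasSumMod {I : Type*} (v : I → M) (s : M) : Prop :=
  ∃ b : Finset I → L0 μ, (∀ F, IsLUB (sumUB μ v s F) (b F)) ∧ IsGLB (Set.range b) 0

/-- A family in a Banach `L⁰(𝕏)`-module is summable if it has a sum. -/
def SummableMod {I : Type*} (v : I → M) : Prop :=
  ∃ s, HasSumMod μ v s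

/-- The partial sums `∑_{i ∈ F} |v i|` of the pointwise norms of a family; the element `|v|₁`
of `ℓ₁(I, ℳ)` is the supremum of this set. -/
def l1PartialSums {I : Type*} (v : I → M) : Set (L0 μ) :=
  {g | ∃ F : Finset I, g = ∑ i ∈ F, pn μ (v i)}

/-- Membership in `ℓ₁(I, ℳ)`: the partial sums of the pointwise norms admit a supremum
(equivalently, an upper bound) in `L⁰(𝕏)`. -/
def Meml1 {I : Type*} (v : I → M) : Prop :=
  ∃ b, IsLUB (l1PartialSums μ v) b

/-- The partial sums `∑_{i ∈ F} |v i|` for an `L⁰(𝕏)`-valued family. -/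
def l1PartialSumsF {I : Type*} (v : I → L0 μ) : Set (L0 μ) :=
  {g | ∃ F : Finset I, g = ∑ i ∈ F, |v i|}

/-- Membership in `ℓ₁(I, L⁰(𝕏))`. -/
def Meml1F {I : Type*} (v : I → L0 μ) : Prop :=
  ∃ b, IsLUB (l1PartialSumsF μ v) b

/-- The set whose infimum defines the projective pointwise norm: all values
`∑_{i=1}^n |v_i||w_i|` over representations `α = ∑_{i=1}^n v_i ⊗ w_i`. -/
def piReps (α : M ⊗[L0 μ] N) : Set (L0 μ) :=
  {g | ∃ (n : ℕ) (v : Fin n → M) (w : Fin n → N),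
    α = ∑ i, v i ⊗ₜ[L0 μ] w i ∧ g = ∑ i, pn μ (v i) * pn μ (w i)}

/-- The set whose supremum defines the injective pointwise norm: all values
`|∑_{i=1}^n ω(v_i) η(w_i)|` over representations `α = ∑_{i=1}^n v_i ⊗ w_i` and elements
`ω ∈ 𝔻_{ℳ*}`, `η ∈ 𝔻_{𝒩*}`. -/
def epsReps (α : M ⊗[L0 μ] N) : Set (L0 μ) :=
  {g | ∃ (n : ℕ) (v : Fin n → M) (w : Fin n → N)
    (ω : M →ₗ[L0 μ] L0 μ) (η : N →ₗ[L0 μ] L0 μ), InDualDisc μ ω ∧ InDualDisc μ η ∧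
    α = ∑ i, v i ⊗ₜ[L0 μ] w i ∧ g = |∑ i, ω (v i) * η (w i)|}

/-- `IsPiTensor μ M N P e` states that the Banach `L⁰(𝕏)`-module `P`, together with the
`L⁰(𝕏)`-linear map `e` defined on the algebraic tensor product, realizes the projective
tensor product `ℳ ⊗̂_π 𝒩`: the pointwise norm of `e α` is the projective pointwise norm
`|α|_π` and the image of `e` is dense. -/
structure IsPiTensor (M N P : Type*) [AddCommGroup M] [Module (L0 μ) M] [BanachMod μ M]
    [AddCommGroup N] [Module (L0 μ) N] [BanachMod μ N]
    [AddCommGroup P] [Module (L0 μ) P] [BanachMod μ P]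
    (e : M ⊗[L0 μ] N →ₗ[L0 μ] P) : Prop where
  pn_emb : ∀ α : M ⊗[L0 μ] N, IsGLB (piReps μ α) (pn μ (e α))
  dense : ∀ p : P, ∀ ε : ℝ, 0 < ε → ∃ α : M ⊗[L0 μ] N, dM μ (e α) p < ε

/-- `IsEpsTensor μ M N P e` states that the Banach `L⁰(𝕏)`-module `P`, together with the
`L⁰(𝕏)`-linear map `e` defined on the algebraic tensor product, realizes the injective
tensor product `ℳ ⊗̂_ε 𝒩`: the pointwise norm of `e α` is the injective pointwise norm
`|α|_ε` and the image of `e` is dense. -/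
structure IsEpsTensor (M N P : Type*) [AddCommGroup M] [Module (L0 μ) M] [BanachMod μ M]
    [AddCommGroup N] [Module (L0 μ) N] [BanachMod μ N]
    [AddCommGroup P] [Module (L0 μ) P] [BanachMod μ P]
    (e : M ⊗[L0 μ] N →ₗ[L0 μ] P) : Prop where
  pn_emb : ∀ α : M ⊗[L0 μ] N, IsLUB (epsReps μ α) (pn μ (e α))
  dense : ∀ p : P, ∀ ε : ℝ, 0 < ε → ∃ α : M ⊗[L0 μ] N, dM μ (e α) p < ε

end Defs

/-! ### The ordered ring `L⁰` -/

section Helpers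

variable {μ : Measure X}

theorem L0.add_ae (f g : L0 μ) : ∀ᵐ x ∂μ, (f + g) x = f x + g x := AEEqFun.coeFn_add f g

theorem L0.sub_ae (f g : L0 μ) : ∀ᵐ x ∂μ, (f - g) x = f x - g x := AEEqFun.coeFn_sub f g

theorem L0.mul_ae (f g : L0 μ) : ∀ᵐ x ∂μ, (f * g) x = f x * g x := AEEqFun.coeFn_mul f g

theorem L0.zero_ae : ∀ᵐ x ∂μ, (0 : L0 μ) x = 0 := AEEqFun.coeFn_zero

theorem L0.one_ae : ∀ᵐ x ∂μ, (1 : L0 μ) x = 1 := AEEqFun.coeFn_one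

theorem L0.le_iff {f g : L0 μ} : f ≤ g ↔ ∀ᵐ x ∂μ, f x ≤ g x := AEEqFun.coeFn_le.symm

instance : IsOrderedRing (L0 μ) where
  add_le_add_left a b h c := by
    rw [L0.le_iff] at h ⊢
    filter_upwards [h, L0.add_ae a c, L0.add_ae b c] with x h1 h2 h3
    rw [h2, h3]
    linarith
  zero_le_one := by
    rw [L0.le_iff]
    filter_upwards [L0.zero_ae (μ := μ), L0.one_ae (μ := μ)] with x h1 h2
    rw [h1, h2]
    exact zero_le_one
  mul_le_mul_of_nonneg_left a ha b c h := by
    rw [L0.le_iff] at h ha ⊢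
    filter_upwards [h, ha, L0.mul_ae a b, L0.mul_ae a c, L0.zero_ae (μ := μ)] with x h1 h2 h3 h4 h5
    rw [h3, h4]
    rw [h5] at h2
    exact mul_le_mul_of_nonneg_left h1 h2
  mul_le_mul_of_nonneg_right a ha b c h := by
    rw [L0.le_iff] at h ha ⊢
    filter_upwards [h, ha, L0.mul_ae b a, L0.mul_ae c a, L0.zero_ae (μ := μ)] with x h1 h2 h3 h4 h5
    rw [h3, h4]
    rw [h5] at h2
    exact mul_le_mul_of_nonneg_right h1 h2

theorem L0.mul_self_nonneg (f : L0 μ) : 0 ≤ f * f := by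
  rw [L0.le_iff]
  filter_upwards [L0.mul_ae f f, L0.zero_ae (μ := μ)] with x h1 h2
  rw [h1, h2]
  exact _root_.mul_self_nonneg _

theorem L0.le_one_of_idem {p : L0 μ} (h : p * p = p) : p ≤ 1 := by
  have h1 := L0.mul_self_nonneg (1 - p)
  have h2 : (1 - p) * (1 - p) = 1 - p := by
    have : (1 - p) * (1 - p) = 1 - p - p + p * p := by ring
    rw [this, h]
    ring
  rw [h2] at h1
  exact sub_nonneg.1 h1

/-- The pointwise inverse in `L⁰`, with value `0` where the function vanishes. -/
def L0.pinv (g : L0 μ) : L0 μ := g.compMeasurable (fun t : ℝ => t⁻¹) measurable_inv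

theorem L0.pinv_ae (g : L0 μ) : ∀ᵐ x ∂μ, L0.pinv g x = (g x)⁻¹ :=
  AEEqFun.coeFn_compMeasurable _ _ g

theorem L0.pinv_nonneg {g : L0 μ} (hg : 0 ≤ g) : 0 ≤ L0.pinv g := by
  rw [L0.le_iff] at hg ⊢
  filter_upwards [hg, L0.pinv_ae g, L0.zero_ae (μ := μ)] with x h1 h2 h3
  rw [h3] at h1
  rw [h2, h3]
  exact inv_nonneg.2 h1

theorem L0.pinv_mul_mul (g : L0 μ) : L0.pinv g * g * g = g := by
  refine AEEqFun.ext ?_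
  filter_upwards [L0.pinv_ae g, L0.mul_ae (L0.pinv g * g) g, L0.mul_ae (L0.pinv g) g]
    with x h1 h2 h3
  rw [h2, h3, h1]
  rcases eq_or_ne (g x) 0 with h | h
  · simp [h]
  · field_simp

theorem L0.mul_pinv_idem (g : L0 μ) :
    (L0.pinv g * g) * (L0.pinv g * g) = L0.pinv g * g := by
  calc (L0.pinv g * g) * (L0.pinv g * g) = L0.pinv g * (L0.pinv g * g * g) := by ring
    _ = _ := by rw [L0.pinv_mul_mul]

theorem L0.pinv_mul_of_one_le {g : L0 μ} (hg : 1 ≤ g) : L0.pinv g * g = 1 := by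
  refine AEEqFun.ext ?_
  rw [L0.le_iff] at hg
  filter_upwards [hg, L0.pinv_ae g, L0.mul_ae (L0.pinv g) g, L0.one_ae (μ := μ)]
    with x h1 h2 h3 h4
  rw [h4] at h1
  rw [h3, h2, h4]
  exact inv_mul_cancel₀ (by linarith)

/-! ### Monotone sequences -/

/-- A bounded increasing sequence in `L⁰` has a supremum, which is its a.e. pointwise limit. -/
theorem exists_monotone_limit {g : ℕ → L0 μ} (hg : Monotone g) {b : L0 μ} (hb : ∀ n, g n ≤ b) :
    ∃ f : L0 μ, (∀ᵐ x ∂μ, Tendsto (fun n => g n x) atTop (nhds (f x))) ∧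
      IsLUB (Set.range g) f := by
  have hmono : ∀ᵐ x ∂μ, Monotone fun n => g n x := by
    have : ∀ᵐ x ∂μ, ∀ n, g n x ≤ g (n + 1) x :=
      ae_all_iff.2 fun n => L0.le_iff.1 (hg n.le_succ)
    filter_upwards [this] with x hx
    exact monotone_nat_of_le_succ hx
  have hbd : ∀ᵐ x ∂μ, ∀ n, g n x ≤ b x := ae_all_iff.2 fun n => L0.le_iff.1 (hb n)
  have hlim : ∀ᵐ x ∂μ, Tendsto (fun n => g n x) atTop (nhds (⨆ n, g n x)) := by
    filter_upwards [hmono, hbd] with x h1 h2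
    exact tendsto_atTop_ciSup h1 ⟨b x, by rintro _ ⟨n, rfl⟩; exact h2 n⟩
  have hmeas : AEStronglyMeasurable (fun x => ⨆ n, g n x) μ :=
    aestronglyMeasurable_of_tendsto_ae atTop (fun n => (g n).aestronglyMeasurable) hlim
  have hf := AEEqFun.coeFn_mk _ hmeas
  refine ⟨AEEqFun.mk _ hmeas, ?_, ?_, ?_⟩
  · filter_upwards [hf, hlim] with x h1 h2
    rwa [h1]
  · rintro _ ⟨n, rfl⟩
    rw [L0.le_iff]
    filter_upwards [hf, hmono, hlim] with x h1 h2 h3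
    rw [h1]
    exact h2.ge_of_tendsto h3 n
  · intro u hu
    have hu' : ∀ᵐ x ∂μ, ∀ n, g n x ≤ u x :=
      ae_all_iff.2 fun n => L0.le_iff.1 (hu ⟨n, rfl⟩)
    rw [L0.le_iff]
    filter_upwards [hf, hu'] with x h1 h2
    rw [h1]
    exact ciSup_le h2

/-! ### The size functional `dL0 μ · 0` -/

section Size

variable [SFinite μ]

theorem ae_toFinite_of {p : X → Prop} (h : ∀ᵐ x ∂μ, p x) : ∀ᵐ x ∂μ.toFinite, p x :=
  (toFinite_absolutelyContinuous μ).ae_le h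

theorem ae_of_toFinite {p : X → Prop} (h : ∀ᵐ x ∂μ.toFinite, p x) : ∀ᵐ x ∂μ, p x :=
  (absolutelyContinuous_toFinite μ).ae_le h

theorem L0.aesm (f : L0 μ) : AEStronglyMeasurable f μ.toFinite :=
  f.aestronglyMeasurable.mono_ac (toFinite_absolutelyContinuous μ)

theorem integrable_trunc (f g : L0 μ) :
    Integrable (fun x => min |f x - g x| 1) μ.toFinite := by
  refine Integrable.of_bound (C := 1) ?_ ?_
  · have h := (f.aesm.sub g.aesm).norm
    exact h.inf aestronglyMeasurable_const
  · refine Eventually.of_forall fun x => ?_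
    rw [Real.norm_of_nonneg (le_min (abs_nonneg _) zero_le_one)]
    exact min_le_right _ _

theorem dL0_nonneg (f g : L0 μ) : 0 ≤ dL0 μ f g :=
  integral_nonneg fun _ => le_min (abs_nonneg _) zero_le_one

theorem dL0_mono {f g : L0 μ} (hf : 0 ≤ f) (h : f ≤ g) : dL0 μ f 0 ≤ dL0 μ g 0 := by
  refine integral_mono_ae (integrable_trunc _ _) (integrable_trunc _ _) ?_
  rw [L0.le_iff] at hf h
  filter_upwards [ae_toFinite_of hf, ae_toFinite_of h, ae_toFinite_of (L0.zero_ae (μ := μ))]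
    with x h1 h2 h3
  rw [h3] at h1 ⊢
  rw [sub_zero, sub_zero, abs_of_nonneg h1, abs_of_nonneg (h1.trans h2)]
  exact min_le_min_right _ h2

theorem dL0_add_le (f g : L0 μ) : dL0 μ (f + g) 0 ≤ dL0 μ f 0 + dL0 μ g 0 := by
  unfold dL0
  rw [← integral_add (integrable_trunc _ _) (integrable_trunc _ _)]
  refine integral_mono_ae (integrable_trunc _ _)
    ((integrable_trunc _ _).add (integrable_trunc _ _)) ?_
  filter_upwards [ae_toFinite_of (L0.add_ae f g), ae_toFinite_of (L0.zero_ae (μ := μ))]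
    with x h1 h2
  simp only [h1, h2, sub_zero]
  have h3 := abs_add_le (f x) (g x)
  have h4 := abs_nonneg (f x)
  have h5 := abs_nonneg (g x)
  rcases le_total |f x| 1 with a | a <;> rcases le_total |g x| 1 with b | b <;>
    simp only [min_eq_left, min_eq_right, a, b] <;>
    first
    | exact (min_le_left _ _).trans h3
    | (refine (min_le_right _ _).trans ?_; linarith)

theorem eq_zero_of_dL0 {f : L0 μ} (h : dL0 μ f 0 = 0) : f = 0 := by
  unfold dL0 at h
  rw [integral_eq_zero_iff_of_nonneg (fun _ => le_min (abs_nonneg _) zero_le_one)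
    (integrable_trunc _ _)] at h
  refine AEEqFun.ext ?_
  filter_upwards [ae_of_toFinite h, L0.zero_ae (μ := μ)] with x h1 h2
  simp only [Pi.zero_apply, h2, sub_zero] at h1
  rw [h2]
  by_contra h3
  have : 0 < min |f x| 1 := lt_min (abs_pos.2 h3) one_pos
  linarith

/-- Inequalities up to errors that tend to zero in measure hold exactly. -/
theorem le_of_le_add_small {a c : L0 μ} {h : ℕ → L0 μ} (hle : ∀ n, a ≤ c + h n)
    (h0 : ∀ n, 0 ≤ h n) (hlim : Tendsto (fun n => dL0 μ (h n) 0) atTop (nhds 0)) : a ≤ c := by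
  have key : dL0 μ ((a - c) ⊔ 0) 0 ≤ 0 := by
    refine ge_of_tendsto' hlim fun n => dL0_mono le_sup_right (sup_le ?_ (h0 n))
    exact sub_le_iff_le_add'.2 (hle n)
  have := eq_zero_of_dL0 (le_antisymm key (dL0_nonneg _ _))
  have h2 : a - c ≤ 0 := le_sup_left.trans this.le
  exact sub_nonpos.1 h2

/-! ### Dedekind completeness of `L⁰` -/

theorem integrable_arctan (f : L0 μ) : Integrable (fun x => Real.arctan (f x)) μ.toFinite := by
  refine Integrable.of_bound (C := Real.pi / 2) ?_ ?_
  · exact Real.continuous_arctan.comp_aestronglyMeasurable f.aesm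
  · refine Eventually.of_forall fun x => ?_
    rw [Real.norm_eq_abs, abs_le]
    exact ⟨(Real.neg_pi_div_two_lt_arctan _).le, (Real.arctan_lt_pi_div_two _).le⟩

/-- A bounded, strictly increasing functional on `L⁰`, used to exhaust directed sets. -/
def arcInt (f : L0 μ) : ℝ := ∫ x, Real.arctan (f x) ∂μ.toFinite

theorem arcInt_mono {f g : L0 μ} (h : f ≤ g) : arcInt f ≤ arcInt g := by
  refine integral_mono_ae (integrable_arctan f) (integrable_arctan g) ?_
  filter_upwards [ae_toFinite_of (L0.le_iff.1 h)] with x hx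
  exact Real.arctan_mono hx

theorem arcInt_bdd (f : L0 μ) : arcInt f ≤ ∫ _, Real.pi / 2 ∂μ.toFinite :=
  integral_mono (integrable_arctan f) (integrable_const _)
    fun _ => (Real.arctan_lt_pi_div_two _).le

theorem eq_of_arcInt {f g : L0 μ} (h : f ≤ g) (hg : arcInt g ≤ arcInt f) : f = g := by
  have h1 : arcInt f = arcInt g := le_antisymm (arcInt_mono h) hg
  have h2 := (integral_eq_iff_of_ae_le (integrable_arctan f) (integrable_arctan g) (by
    filter_upwards [ae_toFinite_of (L0.le_iff.1 h)] with x hx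
    exact Real.arctan_mono hx)).1 h1
  refine AEEqFun.ext ?_
  filter_upwards [ae_of_toFinite h2] with x hx
  exact Real.arctan_injective hx

theorem arcInt_tendsto {g : ℕ → L0 μ} {f : L0 μ}
    (h : ∀ᵐ x ∂μ, Tendsto (fun n => g n x) atTop (nhds (f x))) :
    Tendsto (fun n => arcInt (g n)) atTop (nhds (arcInt f)) := by
  refine tendsto_integral_of_dominated_convergence (fun _ => Real.pi / 2)
    (fun n => (integrable_arctan (g n)).aestronglyMeasurable) (integrable_const _) ?_ ?_
  · refine fun n => Eventually.of_forall fun x => ?_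
    rw [Real.norm_eq_abs, abs_le]
    exact ⟨(Real.neg_pi_div_two_lt_arctan _).le, (Real.arctan_lt_pi_div_two _).le⟩
  · filter_upwards [ae_toFinite_of h] with x hx
    exact (Real.continuous_arctan.tendsto _).comp hx

theorem dL0_tendsto {g : ℕ → L0 μ} {f : L0 μ}
    (h : ∀ᵐ x ∂μ, Tendsto (fun n => g n x) atTop (nhds (f x))) :
    Tendsto (fun n => dL0 μ (f - g n) 0) atTop (nhds 0) := by
  have h0 : (0 : ℝ) = ∫ _, (0 : ℝ) ∂μ.toFinite := by simp
  rw [h0]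
  refine tendsto_integral_of_dominated_convergence (fun _ => 1)
    (fun n => (integrable_trunc _ _).aestronglyMeasurable) (integrable_const _) ?_ ?_
  · refine fun n => Eventually.of_forall fun x => ?_
    rw [Real.norm_of_nonneg (le_min (abs_nonneg _) zero_le_one)]
    exact min_le_right _ _
  · filter_upwards [ae_toFinite_of h, ae_toFinite_of (L0.zero_ae (μ := μ)),
      ae_toFinite_of (ae_all_iff.2 fun n => L0.sub_ae f (g n))] with x hx hz hs
    have h1 : Tendsto (fun n => min |f x - g n x| 1) atTop (nhds (min |f x - f x| 1)) :=
      ((tendsto_const_nhds.sub hx).abs).min tendsto_const_nhds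
    simpa [hz, hs] using h1

/-- A bounded upward directed set in `L⁰` has a supremum, and the supremum is the limit in measure
of a sequence of members. The sequence is chosen to maximise `arcInt` over the set; strict
monotonicity of `arcInt` forces its limit to dominate every member. -/
theorem exists_isLUB_of_directed {D : Set (L0 μ)} (hne : D.Nonempty)
    (hdir : DirectedOn (· ≤ ·) D) (hb : BddAbove D) :
    ∃ f : L0 μ, IsLUB D f ∧ ∃ g : ℕ → L0 μ, (∀ n, g n ∈ D) ∧
      Tendsto (fun n => dL0 μ (f - g n) 0) atTop (nhds 0) := by
  obtain ⟨b, hb⟩ := hb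
  set A := sSup (arcInt '' D) with hA
  have hbdd : BddAbove (arcInt '' D) := by
    refine ⟨∫ _, Real.pi / 2 ∂μ.toFinite, ?_⟩
    rintro _ ⟨h, -, rfl⟩
    exact arcInt_bdd h
  have hle : ∀ h ∈ D, arcInt h ≤ A := fun h hh => le_csSup hbdd ⟨h, hh, rfl⟩
  have hseq : ∀ n : ℕ, ∃ h ∈ D, A - 1 / ((n : ℝ) + 1) < arcInt h := by
    intro n
    have hpos : 0 < 1 / ((n : ℝ) + 1) := by positivity
    obtain ⟨_, ⟨h, hh, rfl⟩, h2⟩ := exists_lt_of_lt_csSup (hne.image arcInt)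
      (show A - 1 / ((n : ℝ) + 1) < sSup (arcInt '' D) by rw [← hA]; linarith)
    exact ⟨h, hh, h2⟩
  choose h hhD hhA using hseq
  have hup : ∀ p q : D, ∃ r : D, p ≤ r ∧ q ≤ r := by
    rintro ⟨p, hp⟩ ⟨q, hq⟩
    obtain ⟨r, hr, h1, h2⟩ := hdir p hp q hq
    exact ⟨⟨r, hr⟩, h1, h2⟩
  choose up hup1 hup2 using hup
  let g : ℕ → D := fun n => Nat.rec ⟨h 0, hhD 0⟩ (fun n p => up p ⟨h (n + 1), hhD (n + 1)⟩) n
  have hgstep : ∀ n, (g n).1 ≤ (g (n + 1)).1 := fun n =>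
    hup1 (g n) ⟨h (n + 1), hhD (n + 1)⟩
  have hgmono : Monotone fun n => (g n).1 := monotone_nat_of_le_succ hgstep
  have hgh : ∀ n, h n ≤ (g n).1 := by
    intro n
    cases n with
    | zero => exact le_refl (h 0)
    | succ n => exact hup2 (g n) ⟨h (n + 1), hhD (n + 1)⟩
  obtain ⟨f, hflim, hflub⟩ := exists_monotone_limit hgmono (fun n => hb (g n).2)
  have hfA : A ≤ arcInt f := by
    have h1 : Tendsto (fun n : ℕ => A - 1 / ((n : ℝ) + 1)) atTop (nhds (A - 0)) :=
      tendsto_const_nhds.sub tendsto_one_div_add_atTop_nhds_zero_nat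
    rw [sub_zero] at h1
    exact le_of_tendsto' h1 fun n =>
      (hhA n).le.trans (arcInt_mono ((hgh n).trans (hflub.1 ⟨n, rfl⟩)))
  refine ⟨f, ⟨?_, ?_⟩, fun n => (g n).1, fun n => (g n).2, dL0_tendsto hflim⟩
  · intro k hk
    have hkA : arcInt (f ⊔ k) ≤ A := by
      have h1 : ∀ᵐ x ∂μ, Tendsto (fun n => ((g n).1 ⊔ k) x) atTop (nhds ((f ⊔ k) x)) := by
        filter_upwards [hflim, AEEqFun.coeFn_sup f k,
          ae_all_iff.2 fun n => AEEqFun.coeFn_sup (g n).1 k] with x h1 h2 h3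
        simp only [h2, h3]
        exact h1.sup_nhds tendsto_const_nhds
      refine le_of_tendsto' (arcInt_tendsto h1) fun n => ?_
      exact (arcInt_mono (sup_le (hup1 (g n) ⟨k, hk⟩) (hup2 (g n) ⟨k, hk⟩))).trans
        (hle _ (up (g n) ⟨k, hk⟩).2)
    have := eq_of_arcInt (le_sup_left : f ≤ f ⊔ k) (hkA.trans hfA)
    rw [this]
    exact le_sup_right
  · intro u hu
    refine hflub.2 ?_
    rintro _ ⟨n, rfl⟩
    exact hu (g n).2

theorem exists_isLUB {S : Set (L0 μ)} (hne : S.Nonempty) (hb : BddAbove S) :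
    ∃ f : L0 μ, IsLUB S f := by
  obtain ⟨f, hf, -⟩ := exists_isLUB_of_directed (D := supClosure S)
    (hne.mono subset_supClosure) supClosed_supClosure.directedOn
    (by rw [BddAbove, upperBounds_supClosure]; exact hb)
  exact ⟨f, isLUB_supClosure.1 hf⟩

end Size

/-! ### Sums in Banach modules -/

section Modules

variable [SFinite μ] {M : Type*} [AddCommGroup M] [Module (L0 μ) M] [BanachMod μ M]

theorem pn_nonneg (v : M) : 0 ≤ pn μ v := BanachMod.pn_nonneg v

theorem pn_zero : pn μ (0 : M) = 0 := (BanachMod.pn_eq_zero 0).2 rfl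

theorem pn_add_le (v w : M) : pn μ (v + w) ≤ pn μ v + pn μ w := BanachMod.pn_add_le v w

theorem pn_smul (f : L0 μ) (v : M) : pn μ (f • v) = |f| * pn μ v := BanachMod.pn_smul f v

theorem pn_neg (v : M) : pn μ (-v) = pn μ v := by
  have h := pn_smul (μ := μ) (-1) v
  rwa [neg_one_smul, abs_neg, abs_of_nonneg (zero_le_one' (L0 μ)), one_mul] at h

theorem pn_sub_le (v w : M) : pn μ (v - w) ≤ pn μ v + pn μ w := by
  rw [sub_eq_add_neg]
  exact (pn_add_le _ _).trans_eq (by rw [pn_neg])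

theorem pn_sub_comm (v w : M) : pn μ (v - w) = pn μ (w - v) := by
  rw [← pn_neg, neg_sub]

theorem pn_sum_le {I : Type*} (v : I → M) (F : Finset I) :
    pn μ (∑ i ∈ F, v i) ≤ ∑ i ∈ F, pn μ (v i) := by
  classical
  induction F using Finset.induction_on with
  | empty => simp [pn_zero]
  | insert i F hi ih =>
    rw [Finset.sum_insert hi, Finset.sum_insert hi]
    exact (pn_add_le _ _).trans (by gcongr)

theorem pn_smul_sphere_le (f : L0 μ) {v : M} (hv : pn μ v * pn μ v = pn μ v) :
    pn μ (f • v) ≤ |f| := by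
  rw [pn_smul]
  exact mul_le_of_le_one_right (abs_nonneg f) (L0.le_one_of_idem hv)

/-- To have sum `s` it suffices that the tails are dominated by some `c` with infimum at most `0`;
the inner suprema exist by Dedekind completeness. -/
theorem hasSumMod_of_le {I : Type*} {v : I → M} {s : M} (c : Finset I → L0 μ)
    (hc : ∀ F G : Finset I, Disjoint G F → pn μ (s - (∑ i ∈ F, v i + ∑ i ∈ G, v i)) ≤ c F)
    (h0 : ∀ l : L0 μ, (∀ F, l ≤ c F) → l ≤ 0) : HasSumMod μ v s := by
  have hub : ∀ F, c F ∈ upperBounds (sumUB μ v s F) := by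
    rintro F _ ⟨G, hG, rfl⟩
    exact hc F G hG
  have hne : ∀ F, pn μ (s - (∑ i ∈ F, v i + ∑ i ∈ (∅ : Finset I), v i)) ∈ sumUB μ v s F :=
    fun F => ⟨∅, Finset.disjoint_empty_left F, rfl⟩
  choose b hb using fun F => exists_isLUB ⟨_, hne F⟩ ⟨c F, hub F⟩
  refine ⟨b, hb, ?_, ?_⟩
  · rintro _ ⟨F, rfl⟩
    exact (pn_nonneg _).trans ((hb F).1 (hne F))
  · intro l hl
    exact h0 l fun F => (hl ⟨F, rfl⟩).trans ((hb F).2 (hub F))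

/-- The converse of `hasSumMod_of_le`, where the dominating family is moreover antitone. -/
theorem HasSumMod.exists_bound {I : Type*} {v : I → M} {s : M} (h : HasSumMod μ v s) :
    ∃ c : Finset I → L0 μ, Antitone c ∧
      (∀ F G : Finset I, Disjoint G F → pn μ (s - (∑ i ∈ F, v i + ∑ i ∈ G, v i)) ≤ c F) ∧
      (∀ l : L0 μ, (∀ F, l ≤ c F) → l ≤ 0) := by
  classical
  obtain ⟨b, hb, hglb⟩ := h
  refine ⟨b, ?_, fun F G hG => (hb F).1 ⟨G, hG, rfl⟩, fun l hl => hglb.2 ?_⟩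
  · intro F F' hFF'
    refine (hb F').2 ?_
    rintro _ ⟨G, hG, rfl⟩
    refine (hb F).1 ⟨(F' \ F) ∪ G, ?_, ?_⟩
    · rw [Finset.disjoint_union_left]
      exact ⟨Finset.sdiff_disjoint, hG.mono_right hFF'⟩
    · rw [Finset.sum_union (hG.symm.mono_left Finset.sdiff_subset), ← add_assoc,
        add_comm (∑ i ∈ F, v i) (∑ i ∈ F' \ F, v i), Finset.sum_sdiff hFF']
  · rintro _ ⟨F, rfl⟩
    exact hl F

theorem HasSumMod.add {I : Type*} {v w : I → M} {s t : M} (hv : HasSumMod μ v s)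
    (hw : HasSumMod μ w t) : HasSumMod μ (fun i => v i + w i) (s + t) := by
  classical
  obtain ⟨c, hcm, hc, hc0⟩ := hv.exists_bound
  obtain ⟨d, hdm, hd, hd0⟩ := hw.exists_bound
  refine hasSumMod_of_le (fun F => c F + d F) ?_ ?_
  · intro F G hG
    have e : s + t - (∑ i ∈ F, (v i + w i) + ∑ i ∈ G, (v i + w i)) =
        (s - (∑ i ∈ F, v i + ∑ i ∈ G, v i)) + (t - (∑ i ∈ F, w i + ∑ i ∈ G, w i)) := by
      rw [Finset.sum_add_distrib, Finset.sum_add_distrib]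
      abel
    rw [e]
    exact (pn_add_le _ _).trans (add_le_add (hc F G hG) (hd F G hG))
  · intro l hl
    -- antitonicity decouples the two indices: `l ≤ c F + d F'` for all `F`, `F'`
    refine hc0 l fun F => sub_nonpos.1 (hd0 _ fun F' => ?_)
    rw [sub_le_iff_le_add']
    exact (hl (F ∪ F')).trans
      (add_le_add (hcm Finset.subset_union_left) (hdm Finset.subset_union_right))

theorem HasSumMod.smul {I : Type*} {v : I → M} {s : M} (g : L0 μ) (hv : HasSumMod μ v s) :
    HasSumMod μ (fun i => g • v i) (g • s) := by
  obtain ⟨c, -, hc, hc0⟩ := hv.exists_bound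
  have hcn : ∀ F, 0 ≤ c F := fun F => (pn_nonneg _).trans (hc F ∅ (Finset.disjoint_empty_left F))
  refine hasSumMod_of_le (fun F => |g| * c F) ?_ ?_
  · intro F G hG
    have e : g • s - (∑ i ∈ F, g • v i + ∑ i ∈ G, g • v i) =
        g • (s - (∑ i ∈ F, v i + ∑ i ∈ G, v i)) := by
      rw [← Finset.smul_sum, ← Finset.smul_sum, smul_sub, smul_add]
    rw [e, pn_smul]
    exact mul_le_mul_of_nonneg_left (hc F G hG) (abs_nonneg g)
  · intro l hl
    -- divide by the invertible element `u = 1 + |g|`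
    set u : L0 μ := 1 + |g| with hu
    have hu1 : 1 ≤ u := le_add_of_nonneg_right (abs_nonneg g)
    have hu0 : 0 ≤ u := zero_le_one.trans hu1
    have hinv := L0.pinv_mul_of_one_le hu1
    have h1 : L0.pinv u * l ≤ 0 := hc0 _ fun F => by
      have h2 : l ≤ u * c F :=
        (hl F).trans (mul_le_mul_of_nonneg_right (le_add_of_nonneg_left zero_le_one) (hcn F))
      calc L0.pinv u * l ≤ L0.pinv u * (u * c F) :=
            mul_le_mul_of_nonneg_left h2 (L0.pinv_nonneg hu0)
        _ = c F := by rw [← mul_assoc, hinv, one_mul]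
    calc l = u * (L0.pinv u * l) := by rw [← mul_assoc, mul_comm u, hinv, one_mul]
      _ ≤ u * 0 := mul_le_mul_of_nonneg_left h1 hu0
      _ = 0 := mul_zero u

theorem HasSumMod.pn_le {I : Type*} {v : I → M} {s : M} (hv : HasSumMod μ v s) {b : L0 μ}
    (hb : ∀ F : Finset I, ∑ i ∈ F, pn μ (v i) ≤ b) : pn μ s ≤ b := by
  obtain ⟨c, -, hc, hc0⟩ := hv.exists_bound
  refine sub_nonpos.1 (hc0 _ fun F => ?_)
  have h1 := hc F ∅ (Finset.disjoint_empty_left F)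
  rw [Finset.sum_empty, add_zero] at h1
  rw [sub_le_iff_le_add]
  calc pn μ s = pn μ ((s - ∑ i ∈ F, v i) + ∑ i ∈ F, v i) := by rw [sub_add_cancel]
    _ ≤ pn μ (s - ∑ i ∈ F, v i) + pn μ (∑ i ∈ F, v i) := pn_add_le _ _
    _ ≤ c F + b := add_le_add h1 ((pn_sum_le v F).trans (hb F))

/-- Absolutely summable families are summable: the scalar family `a` dominates the norms. -/
theorem summableMod_of_bound {I : Type*} {v : I → M} {a : I → L0 μ} (ha : Meml1F μ a)
    (hva : ∀ i, pn μ (v i) ≤ |a i|) : SummableMod μ v := by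
  classical
  obtain ⟨b, hb⟩ := ha
  set S : Finset I → L0 μ := fun F => ∑ i ∈ F, |a i| with hS
  have hSb : ∀ F, S F ≤ b := fun F => hb.1 ⟨F, rfl⟩
  have hSm : Monotone S := fun F F' h =>
    Finset.sum_le_sum_of_subset_of_nonneg h fun i _ _ => abs_nonneg (a i)
  have hS0 : ∀ F, 0 ≤ b - S F := fun F => sub_nonneg.2 (hSb F)
  have hdiff : ∀ A B : Finset I, pn μ (∑ i ∈ A \ B, v i) ≤ b - S B := by
    intro A B
    refine (pn_sum_le v _).trans ((Finset.sum_le_sum fun i _ => hva i).trans ?_)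
    rw [le_sub_iff_add_le]
    have h1 := hSb (A \ B ∪ B)
    simp only [hS] at h1 ⊢
    rwa [Finset.sum_union Finset.sdiff_disjoint] at h1
  have hAB : ∀ A B : Finset I,
      pn μ (∑ i ∈ A, v i - ∑ i ∈ B, v i) ≤ (b - S A) + (b - S B) := by
    intro A B
    have e : ∑ i ∈ A, v i - ∑ i ∈ B, v i = ∑ i ∈ A \ B, v i - ∑ i ∈ B \ A, v i :=
      (Finset.sum_sdiff_sub_sum_sdiff).symm
    rw [e, add_comm (b - S A)]
    exact (pn_sub_le _ _).trans (add_le_add (hdiff A B) (hdiff B A))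
  obtain ⟨b', hb', g, hgD, hglim⟩ := exists_isLUB_of_directed (D := l1PartialSumsF μ a)
    ⟨_, ∅, rfl⟩ (by
      rintro _ ⟨F, rfl⟩ _ ⟨F', rfl⟩
      exact ⟨S (F ∪ F'), ⟨_, rfl⟩, hSm Finset.subset_union_left, hSm Finset.subset_union_right⟩)
    ⟨b, hb.1⟩
  obtain rfl : b' = b := hb'.unique hb
  choose F hF using hgD
  obtain rfl : g = fun n => S (F n) := funext hF
  have hcauchy : ∀ ε : ℝ, 0 < ε → ∃ N : ℕ, ∀ m ≥ N, ∀ n ≥ N,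
      dL0 μ (BanachMod.pn (∑ i ∈ F m, v i - ∑ i ∈ F n, v i)) 0 < ε := by
    intro ε hε
    obtain ⟨N, hN⟩ := eventually_atTop.1 (hglim.eventually (gt_mem_nhds (half_pos hε)))
    refine ⟨N, fun m hm n hn => ?_⟩
    have h1 := (dL0_mono (pn_nonneg _) (hAB (F m) (F n))).trans (dL0_add_le _ _)
    have h2 := hN m hm
    have h3 := hN n hn
    change dL0 μ (pn μ (∑ i ∈ F m, v i - ∑ i ∈ F n, v i)) 0 < ε
    linarith
  obtain ⟨s, hs⟩ := BanachMod.complete (μ := μ) (fun n => ∑ i ∈ F n, v i) hcauchy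
  change Tendsto (fun n => dL0 μ (pn μ (∑ i ∈ F n, v i - s)) 0) atTop (nhds 0) at hs
  refine ⟨s, hasSumMod_of_le (fun F => b' - S F) ?_ ?_⟩
  · intro A G hG
    rw [← Finset.sum_union hG.symm]
    refine le_of_le_add_small
      (h := fun n => pn μ (∑ i ∈ F n, v i - s) + (b' - S (F n))) ?_ ?_ ?_
    · intro n
      calc pn μ (s - ∑ i ∈ A ∪ G, v i)
          = pn μ ((s - ∑ i ∈ F n, v i) + (∑ i ∈ F n, v i - ∑ i ∈ A ∪ G, v i)) := by
            rw [sub_add_sub_cancel]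
        _ ≤ pn μ (s - ∑ i ∈ F n, v i) + pn μ (∑ i ∈ F n, v i - ∑ i ∈ A ∪ G, v i) :=
            pn_add_le _ _
        _ ≤ pn μ (∑ i ∈ F n, v i - s) + ((b' - S (F n)) + (b' - S A)) := by
            rw [pn_sub_comm s]
            refine add_le_add le_rfl ((hAB _ _).trans (add_le_add le_rfl ?_))
            exact sub_le_sub_left (hSm Finset.subset_union_left) _
        _ = _ := by abel
    · exact fun n => add_nonneg (pn_nonneg _) (hS0 _)
    · have h1 := hs.add hglim
      rw [add_zero] at h1
      exact squeeze_zero (fun n => dL0_nonneg _ _) (fun n => dL0_add_le _ _) h1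
  · intro l hl
    have h1 : b' ≤ b' - l := by
      refine hb.2 ?_
      rintro _ ⟨A, rfl⟩
      exact le_sub_comm.1 (hl A)
    simpa using sub_nonneg.2 h1

theorem hasSumMod_single {I : Type*} {v : I → M} (i₀ : I) (hv : ∀ i, i ≠ i₀ → v i = 0) :
    HasSumMod μ v (v i₀) := by
  classical
  have hsum : ∀ F : Finset I, ∑ i ∈ F, v i = if i₀ ∈ F then v i₀ else 0 := by
    intro F
    split_ifs with h
    · exact Finset.sum_eq_single_of_mem i₀ h fun i _ hi => hv i hi
    · exact Finset.sum_eq_zero fun i hi => hv i (by rintro rfl; exact h hi)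
  refine hasSumMod_of_le (fun F => if i₀ ∈ F then 0 else pn μ (v i₀)) ?_ ?_
  · intro F G hG
    rw [← Finset.sum_union hG.symm, hsum]
    by_cases hF : i₀ ∈ F
    · simp [hF, pn_zero]
    · by_cases hG' : i₀ ∈ G
      · simpa [hF, hG', pn_zero] using pn_nonneg (μ := μ) (v i₀)
      · simp [hF, hG']
  · intro l hl
    simpa using hl {i₀}

/-- Polar decomposition: `w = |w| • v` with `v = |w|⁻¹ • w` in the unit sphere. -/
theorem exists_sphere_smul (w : M) :
    ∃ v : {v : M // pn μ v * pn μ v = pn μ v}, pn μ w • (v : M) = w := by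
  have h1 : pn μ (L0.pinv (pn μ w) • w) = L0.pinv (pn μ w) * pn μ w := by
    rw [pn_smul, abs_of_nonneg (L0.pinv_nonneg (pn_nonneg w))]
  refine ⟨⟨L0.pinv (pn μ w) • w, ?_⟩, ?_⟩
  · rw [h1]
    exact L0.mul_pinv_idem _
  · change pn μ w • (L0.pinv (pn μ w) • w) = w
    rw [smul_smul, ← sub_eq_zero]
    have h2 : (pn μ w * L0.pinv (pn μ w)) • w - w = (L0.pinv (pn μ w) * pn μ w - 1) • w := by
      rw [sub_smul, one_smul, mul_comm]
    refine (BanachMod.pn_eq_zero (μ := μ) _).1 ?_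
    change pn μ _ = 0
    have h3 : |L0.pinv (pn μ w) * pn μ w - 1| = 1 - L0.pinv (pn μ w) * pn μ w := by
      rw [abs_sub_comm]
      exact abs_of_nonneg (sub_nonneg.2 (L0.le_one_of_idem (L0.mul_pinv_idem _)))
    rw [h2, pn_smul, h3, sub_mul, one_mul, L0.pinv_mul_mul, sub_self]

/-- Every `w` has a preimage under `φ` whose `ℓ₁`-norm is exactly `|w|`. -/
theorem exists_preimage (w : M) :
    ∃ f : {v : M // pn μ v * pn μ v = pn μ v} → L0 μ,
      HasSumMod μ (fun v => f v • (v : M)) w ∧ IsLUB (l1PartialSumsF μ f) (pn μ w) := by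
  classical
  obtain ⟨v, hv⟩ := exists_sphere_smul (μ := μ) w
  refine ⟨Pi.single v (pn μ w), ?_, ?_, ?_⟩
  · have h := hasSumMod_single (μ := μ)
      (v := fun u : {v : M // pn μ v * pn μ v = pn μ v} =>
        (Pi.single v (pn μ w) : _ → L0 μ) u • (u : M)) v
      (fun i hi => by simp [Pi.single_eq_of_ne hi])
    simpa [hv] using h
  · rintro _ ⟨F, rfl⟩
    calc ∑ i ∈ F, |(Pi.single v (pn μ w) : _ → L0 μ) i|
        ≤ ∑ i ∈ insert v F, |(Pi.single v (pn μ w) : _ → L0 μ) i| :=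
          Finset.sum_le_sum_of_subset_of_nonneg (Finset.subset_insert _ _)
            fun i _ _ => abs_nonneg _
      _ = |(Pi.single v (pn μ w) : _ → L0 μ) v| :=
          Finset.sum_eq_single_of_mem v (Finset.mem_insert_self _ _)
            fun i _ hi => by rw [Pi.single_eq_of_ne hi, abs_zero]
      _ = pn μ w := by rw [Pi.single_eq_same, abs_of_nonneg (pn_nonneg w)]
  · intro u hu
    refine hu ⟨{v}, ?_⟩
    rw [Finset.sum_singleton, Pi.single_eq_same, abs_of_nonneg (pn_nonneg w)]

end Modules

end Helpers

/-- Let `𝕏` be a σ-finite measure space and `ℳ` a Banach `L⁰(𝕏)`-module.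
For every `f = (f_v)_{v ∈ 𝕊_ℳ} ∈ ℓ₁(𝕊_ℳ, L⁰(𝕏))` the family `{f_v • v}_{v ∈ 𝕊_ℳ}` is
summable in `ℳ`, and the map `φ(f) := ∑_{v ∈ 𝕊_ℳ} f_v • v` is a quotient operator from
`ℓ₁(𝕊_ℳ, L⁰(𝕏))` onto `ℳ` (in particular, `ℳ ≅ ℓ₁(𝕊_ℳ, L⁰(𝕏)) / ker φ`). The unit sphere
`𝕊_ℳ = {v : |v|(x) ∈ {0,1} a.e.}` is encoded by the idempotency `|v|·|v| = |v|`. -/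
theorem l1_sphere_quotient
    (μ : Measure X) [SigmaFinite μ]
    (M : Type*) [AddCommGroup M] [Module (L0 μ) M] [BanachMod μ M] :
    -- summability of `{f_v • v}` for every `f ∈ ℓ₁(𝕊_ℳ, L⁰(𝕏))`
    (∀ f : {v : M // pn μ v * pn μ v = pn μ v} → L0 μ, Meml1F μ f →
      SummableMod μ (fun v : {v : M // pn μ v * pn μ v = pn μ v} => f v • (v : M)))
    -- `φ` is additive and `L⁰(𝕏)`-linear
    ∧ (∀ (f f' : {v : M // pn μ v * pn μ v = pn μ v} → L0 μ) (s s' : M),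
        HasSumMod μ (fun v => f v • (v : M)) s → HasSumMod μ (fun v => f' v • (v : M)) s' →
        HasSumMod μ (fun v => (f v + f' v) • (v : M)) (s + s'))
    ∧ (∀ (g : L0 μ) (f : {v : M // pn μ v * pn μ v = pn μ v} → L0 μ) (s : M),
        HasSumMod μ (fun v => f v • (v : M)) s →
        HasSumMod μ (fun v => (g * f v) • (v : M)) (g • s))
    -- `φ` is bounded: `|φ f| ≤ |f|₁`
    ∧ (∀ (f : {v : M // pn μ v * pn μ v = pn μ v} → L0 μ) (b : L0 μ) (s : M),
        IsLUB (l1PartialSumsF μ f) b → HasSumMod μ (fun v => f v • (v : M)) s →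
        pn μ s ≤ b)
    -- `φ` is surjective
    ∧ (∀ w : M, ∃ f : {v : M // pn μ v * pn μ v = pn μ v} → L0 μ,
        Meml1F μ f ∧ HasSumMod μ (fun v => f v • (v : M)) w)
    -- `φ` is a quotient operator: `|w| = ⋀ { |f|₁ : φ f = w }`
    ∧ (∀ w : M, IsGLB {g : L0 μ | ∃ f : {v : M // pn μ v * pn μ v = pn μ v} → L0 μ,
        HasSumMod μ (fun v => f v • (v : M)) w ∧ IsLUB (l1PartialSumsF μ f) g}
        (pn μ w)) := by
  have hbound : ∀ (f : {v : M // pn μ v * pn μ v = pn μ v} → L0 μ) (b : L0 μ) (s : M),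
      IsLUB (l1PartialSumsF μ f) b → HasSumMod μ (fun v => f v • (v : M)) s → pn μ s ≤ b := by
    intro f b s hb hs
    refine hs.pn_le fun F => ?_
    exact (Finset.sum_le_sum fun v _ => pn_smul_sphere_le (f v) v.2).trans (hb.1 ⟨F, rfl⟩)
  refine ⟨fun f hf => summableMod_of_bound hf fun v => pn_smul_sphere_le (f v) v.2,
    fun f f' s s' hs hs' => ?_, fun g f s hs => ?_, hbound, fun w => ?_, fun w => ?_⟩
  · simpa only [add_smul] using hs.add hs'
  · simpa only [mul_smul] using hs.smul g
  · obtain ⟨f, h1, h2⟩ := exists_preimage (μ := μ) w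
    exact ⟨f, ⟨_, h2⟩, h1⟩
  · -- the infimum is attained
    refine IsLeast.isGLB ⟨exists_preimage w, ?_⟩
    rintro g ⟨f, h1, h2⟩
    exact hbound f g w h2 h1

end Paper
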